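/- Let n ≥ 1 and let G = ℤ × ℤ/nℤ. The Chabauty space C(G) is homeomorphic to ℕ̄ × [d(n)], where the accumulation points (the points (∞, i)) correspond to the d(n) subgroups {0} × ⟨m⟩ for m a positive divisor of n. -/

import Mathlib

open OnePoint

/-- The Chabauty space of an additive topological group `G`:
the set of closed additive subgroups of `G`. -/
def ChabautySpace (G : Type*) [AddGroup G] [TopologicalSpace G] : Type _ :=
  {H : AddSubgroup G // IsClosed (H : Set G)}

/-- The Chabauty topology on the space of closed subgroups, generated by the sets
`O_K = {H | H ∩ K = ∅}` for `K` compact and `O'_U = {H | H ∩ U ≠ ∅}` for `U` open. -/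
instance ChabautySpace.instTopologicalSpace (G : Type*) [AddGroup G] [TopologicalSpace G] :
    TopologicalSpace (ChabautySpace G) :=
  TopologicalSpace.generateFrom
    ({S | ∃ K : Set G, IsCompact K ∧ S = {H : ChabautySpace G | (H.1 : Set G) ∩ K = ∅}} ∪
     {S | ∃ U : Set G, IsOpen U ∧ S = {H : ChabautySpace G | ((H.1 : Set G) ∩ U).Nonempty}})

namespace ChabautySpace

section General

variable {G : Type*} [AddGroup G] [TopologicalSpace G]

lemma isOpen_setOf_mem [DiscreteTopology G] (x : G) :
    IsOpen {H : ChabautySpace G | x ∈ H.1} := by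
  refine TopologicalSpace.isOpen_generateFrom_of_mem (Or.inr ⟨{x}, isOpen_discrete _, ?_⟩)
  ext H
  simp

lemma isOpen_setOf_notMem (x : G) : IsOpen {H : ChabautySpace G | x ∉ H.1} := by
  refine TopologicalSpace.isOpen_generateFrom_of_mem (Or.inl ⟨{x}, isCompact_singleton, ?_⟩)
  ext H
  simp

instance instT2Space [DiscreteTopology G] : T2Space (ChabautySpace G) := by
  have separate : ∀ {H K : ChabautySpace G} {x : G}, x ∈ H.1 → x ∉ K.1 →
      ∃ u v : Set (ChabautySpace G), IsOpen u ∧ IsOpen v ∧ H ∈ u ∧ K ∈ v ∧ Disjoint u v :=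
    fun {H K x} hH hK => ⟨_, _, isOpen_setOf_mem x, isOpen_setOf_notMem x, hH, hK,
      Set.disjoint_left.2 fun _ h h' => h' h⟩
  refine ⟨fun H K hne => ?_⟩
  have hne' : ¬ ∀ x, x ∈ H.1 ↔ x ∈ K.1 := fun h => hne (Subtype.ext (AddSubgroup.ext h))
  obtain ⟨x, hx⟩ := not_forall.1 hne'
  by_cases hH : x ∈ H.1
  · exact separate hH fun hK => hx (iff_of_true hH hK)
  · have hK : x ∈ K.1 := by tauto
    obtain ⟨u, v, hu, hv, hKu, hHv, hd⟩ := separate hK hH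
    exact ⟨v, u, hv, hu, hHv, hKu, hd.symm⟩

/-- In a discrete group, pointwise eventual agreement implies Chabauty convergence. -/
lemma tendsto_of_eventually_mem_iff [DiscreteTopology G] {α : Type*} {l : Filter α}
    {f : α → ChabautySpace G} {H : ChabautySpace G}
    (h : ∀ x, ∀ᶠ a in l, (x ∈ (f a).1 ↔ x ∈ H.1)) : Filter.Tendsto f l (nhds H) := by
  refine TopologicalSpace.tendsto_nhds_generateFrom_iff.2 ?_
  rintro _ (⟨K, hK, rfl⟩ | ⟨U, -, rfl⟩) hH
  · filter_upwards [(Filter.eventually_all_finite hK.finite_of_discrete).2 fun x _ => h x]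
      with a ha
    refine Set.eq_empty_iff_forall_notMem.2 fun x hx => ?_
    exact (Set.eq_empty_iff_forall_notMem.1 hH) x ⟨(ha x hx.2).1 hx.1, hx.2⟩
  · obtain ⟨x, hx, hxU⟩ := hH
    filter_upwards [h x] with a ha
    exact ⟨x, ha.2 hx, hxU⟩

end General

end ChabautySpace

namespace AddSubgroup

variable {A : Type*} [AddCommGroup A]

/-- The subgroups of `ℤ × A` that meet `{0} × A` in `{0} × K` and have nonzero projection
to `ℤ`. -/
def intProdFiber (K : AddSubgroup A) : Set (AddSubgroup (ℤ × A)) :=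
  {H | H.comap (AddMonoidHom.inr ℤ A) = K ∧ ∃ x ∈ H, x.1 ≠ 0}

lemma finite_setOf_mem_int_prod [Finite A] {x : ℤ × A} (hx : x.1 ≠ 0) :
    {H : AddSubgroup (ℤ × A) | x ∈ H}.Finite := by
  set N : ℤ := Nat.card A * x.1 with hN
  have hN0 : N ≠ 0 := mul_ne_zero (by exact_mod_cast Nat.card_pos.ne') hx
  have hmem : ∀ H : AddSubgroup (ℤ × A), x ∈ H → ∀ q : ℤ, (q * N, (0 : A)) ∈ H := by
    intro H hH q
    have h : q • (Nat.card A • x) ∈ H := H.zsmul_mem (H.nsmul_mem hH _) q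
    have e : q • (Nat.card A • x) = (q * N, (0 : A)) := by
      ext
      · simp [hN]
      · simp
    rwa [e] at h
  set F : Set (ℤ × A) := Set.Ico 0 |N| ×ˢ Set.univ
  have hF : F.Finite := (Set.finite_Ico _ _).prod Set.finite_univ
  have reduce : ∀ H : AddSubgroup (ℤ × A), x ∈ H → ∀ y : ℤ × A,
      y ∈ H ↔ (y.1 % N, y.2) ∈ (H : Set (ℤ × A)) ∩ F := by
    intro H hH y
    have hyF : (y.1 % N, y.2) ∈ F :=
      ⟨⟨Int.emod_nonneg _ hN0, Int.emod_lt_abs _ hN0⟩, trivial⟩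
    have e : y = (y.1 % N, y.2) + (y.1 / N * N, (0 : A)) := by
      ext
      · simp [Int.emod_add_ediv_mul]
      · simp
    simp only [Set.mem_inter_iff, hyF, and_true, SetLike.mem_coe]
    conv_lhs => rw [e]
    exact H.add_mem_cancel_right (hmem H hH _)
  refine Set.Finite.of_finite_image (f := fun H => (H : Set (ℤ × A)) ∩ F)
    (hF.finite_subsets.subset ?_) ?_
  · rintro _ ⟨H, -, rfl⟩
    exact Set.inter_subset_right
  · intro H hH H' hH' h
    ext y
    rw [reduce H hH, reduce H' hH']
    exact Iff.of_eq (congrArg (_ ∈ ·) h)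

lemma infinite_intProdFiber (K : AddSubgroup A) : (intProdFiber K).Infinite := by
  refine Set.infinite_of_injective_forall_mem
    (f := fun k : ℕ => (zmultiples ((k : ℤ) + 1)).prod K) ?_ ?_
  · intro k l h
    have mem_iff : ∀ a : ℤ, a ∈ zmultiples ((k : ℤ) + 1) ↔ a ∈ zmultiples ((l : ℤ) + 1) := by
      intro a
      have := SetLike.ext_iff.1 h (a, 0)
      simpa [mem_prod, zero_mem] using this
    simp only [Int.mem_zmultiples_iff] at mem_iff
    have h₁ := (mem_iff (l + 1)).2 dvd_rfl
    have h₂ := (mem_iff (k + 1)).1 dvd_rfl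
    have := Int.dvd_antisymm (by positivity) (by positivity) h₁ h₂
    omega
  · intro k
    refine ⟨?_, ((k : ℤ) + 1, 0), ⟨mem_zmultiples _, zero_mem K⟩, by positivity⟩
    ext b
    simp [mem_prod, zero_mem]

lemma countable_intProdFiber [Finite A] (K : AddSubgroup A) : (intProdFiber K).Countable := by
  refine Set.Countable.mono (s₂ := ⋃ x : {x : ℤ × A // x.1 ≠ 0}, {H | x.1 ∈ H}) ?_
    (Set.countable_iUnion fun x => (finite_setOf_mem_int_prod x.2).countable)
  rintro H ⟨-, x, hxH, hx⟩
  exact Set.mem_iUnion.2 ⟨⟨x, hx⟩, hxH⟩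

lemma nonempty_equiv_intProdFiber [Finite A] (K : AddSubgroup A) :
    Nonempty (ℕ ≃ intProdFiber K) := by
  have := (countable_intProdFiber K).to_subtype
  have := (infinite_intProdFiber K).to_subtype
  exact nonempty_equiv_of_countable

end AddSubgroup

namespace ChabautySpace

variable {A : Type*} [AddCommGroup A] [Finite A] [TopologicalSpace A] [DiscreteTopology A]

/-- The Chabauty space of `ℤ × A`, for `A` a finite discrete abelian group, consists of one
convergent sequence for each subgroup `K` of `A`, with limit `{0} × K`. -/
theorem exists_homeomorph_int_prod {ι : Type*} [Finite ι] [TopologicalSpace ι]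
    [DiscreteTopology ι] (K : ι ≃ AddSubgroup A) :
    ∃ φ : ChabautySpace (ℤ × A) ≃ₜ OnePoint ℕ × ι,
      ∀ H, (φ H).1 = ∞ ↔ ∃ L : AddSubgroup A, H.1 = AddSubgroup.prod ⊥ L := by
  have e := fun i => (AddSubgroup.nonempty_equiv_intProdFiber (K i)).some
  let ψ : OnePoint ℕ × ι → ChabautySpace (ℤ × A) := fun p =>
    ⟨p.1.elim (AddSubgroup.prod ⊥ (K p.2)) (fun j => (e p.2 j).1), isClosed_discrete _⟩
  have ψ_infty : ∀ i, (ψ (∞, i)).1 = AddSubgroup.prod ⊥ (K i) := fun _ => rfl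
  have ψ_coe : ∀ (j : ℕ) i, (ψ ((j : OnePoint ℕ), i)).1 = e i j := fun _ _ => rfl
  have ψ_comap : ∀ p, (ψ p).1.comap (AddMonoidHom.inr ℤ A) = K p.2 := by
    rintro ⟨p, i⟩
    induction p using OnePoint.rec with
    | infty => ext b; simp [ψ_infty, AddSubgroup.mem_prod]
    | coe j => rw [ψ_coe]; exact (e i j).2.1
  have ψ_eq_infty : ∀ p, p.1 = ∞ ↔ ∀ x ∈ (ψ p).1, x.1 = 0 := by
    rintro ⟨p, i⟩
    induction p using OnePoint.rec with
    | infty => exact iff_of_true rfl fun x hx => hx.1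
    | coe j =>
      obtain ⟨x, hxH, hx⟩ := (e i j).2.2
      refine iff_of_false (OnePoint.coe_ne_infty j) fun h => hx (h x ?_)
      rwa [ψ_coe]
  have ψ_injective : Function.Injective ψ := by
    rintro ⟨p, i⟩ ⟨q, i'⟩ h
    obtain rfl : i = i' := K.injective (by rw [← ψ_comap (p, i), h, ψ_comap])
    have hpq : p = ∞ ↔ q = ∞ := by
      rw [ψ_eq_infty (p, i), h, ← ψ_eq_infty (q, i)]
    induction p using OnePoint.rec with
    | infty => rw [hpq.1 rfl]
    | coe j =>
      induction q using OnePoint.rec with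
      | infty => exact absurd (hpq.2 rfl) (OnePoint.coe_ne_infty j)
      | coe k =>
        have h' : (e i j).1 = (e i k).1 := by
          rw [← ψ_coe, h, ψ_coe]
        rw [(e i).injective (Subtype.ext h')]
  have ψ_surjective : Function.Surjective ψ := by
    intro H
    obtain ⟨i, hi⟩ := K.surjective (H.1.comap (AddMonoidHom.inr ℤ A))
    by_cases hH : ∃ x ∈ H.1, x.1 ≠ 0
    · refine ⟨(((e i).symm ⟨H.1, hi.symm, hH⟩ : ℕ), i), Subtype.ext ?_⟩
      rw [ψ_coe, Equiv.apply_symm_apply]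
    · push Not at hH
      refine ⟨(∞, i), Subtype.ext ?_⟩
      rw [ψ_infty, hi]
      ext ⟨a, b⟩
      simp only [AddSubgroup.mem_prod, AddSubgroup.mem_bot, AddSubgroup.mem_comap,
        AddMonoidHom.inr_apply]
      constructor
      · rintro ⟨rfl, h⟩
        exact h
      · intro h
        obtain rfl : a = 0 := hH _ h
        exact ⟨rfl, h⟩
  have ψ_continuous : Continuous ψ := by
    refine continuous_prod_of_discrete_right.2 fun i => ?_
    rw [OnePoint.continuous_iff_from_discrete]
    refine tendsto_of_eventually_mem_iff fun x => ?_
    obtain ⟨a, b⟩ := x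
    by_cases ha : a = 0
    · subst ha
      refine Filter.Eventually.of_forall fun j => ?_
      have mem_iff : ∀ p, ((0 : ℤ), b) ∈ (ψ p).1 ↔ b ∈ K p.2 := fun p => by
        rw [← ψ_comap p]; rfl
      rw [mem_iff, mem_iff]
    · have hfin : {j : ℕ | (a, b) ∈ (e i j).1}.Finite :=
        Set.Finite.preimage (f := fun j => (e i j).1)
          ((Subtype.val_injective.comp (e i).injective).injOn)
          (AddSubgroup.finite_setOf_mem_int_prod (x := (a, b)) ha)
      filter_upwards [hfin.compl_mem_cofinite] with j hj
      refine iff_of_false hj ?_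
      simp [ψ_infty, AddSubgroup.mem_prod, ha]
  let Ψ := Equiv.ofBijective ψ ⟨ψ_injective, ψ_surjective⟩
  have hΨ : Continuous Ψ := ψ_continuous
  refine ⟨(hΨ.homeoOfEquivCompactToT2).symm, fun H => ?_⟩
  obtain ⟨p, rfl⟩ := ψ_surjective H
  have hp : (hΨ.homeoOfEquivCompactToT2).symm (ψ p) = p := Ψ.symm_apply_apply p
  rw [hp]
  constructor
  · obtain ⟨p, i⟩ := p
    rintro rfl
    exact ⟨K i, ψ_infty i⟩
  · rintro ⟨L, hL⟩
    rw [ψ_eq_infty, hL]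
    exact fun x hx => hx.1

end ChabautySpace

namespace ZMod

variable {n : ℕ}

lemma zmultiples_natCast_injOn_divisors [NeZero n] :
    Set.InjOn (fun m : ℕ => AddSubgroup.zmultiples (m : ZMod n)) n.divisors := by
  intro m hm k hk h
  have hm' := Nat.dvd_of_mem_divisors hm
  have hk' := Nat.dvd_of_mem_divisors hk
  have hcard : n / m = n / k := by
    have := congrArg (fun H : AddSubgroup (ZMod n) => Nat.card H) h
    simpa only [Nat.card_zmultiples, ZMod.addOrderOf_coe _ (NeZero.ne n),
      Nat.gcd_eq_right hm', Nat.gcd_eq_right hk'] using this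
  rw [← Nat.div_div_self hm' (NeZero.ne n), hcard, Nat.div_div_self hk' (NeZero.ne n)]

lemma exists_mem_divisors_zmultiples_eq [NeZero n] (H : AddSubgroup (ZMod n)) :
    ∃ m ∈ n.divisors, AddSubgroup.zmultiples (m : ZMod n) = H := by
  obtain ⟨a, ha⟩ := Int.subgroup_cyclic (H.comap (Int.castAddHom (ZMod n)))
  rw [← AddSubgroup.zmultiples_eq_closure, ← Int.zmultiples_natAbs] at ha
  refine ⟨a.natAbs, Nat.mem_divisors.2 ⟨?_, NeZero.ne n⟩, ?_⟩
  · have hn : (n : ℤ) ∈ H.comap (Int.castAddHom (ZMod n)) := by simp [zero_mem]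
    rw [ha, Int.mem_zmultiples_iff] at hn
    exact_mod_cast hn
  · have hsurj : Function.Surjective (Int.castAddHom (ZMod n)) := ZMod.intCast_surjective
    rw [← AddSubgroup.map_comap_eq_self_of_surjective hsurj H, ha, AddMonoidHom.map_zmultiples]
    simp

/-- The subgroups of `ZMod n` correspond to the positive divisors of `n`. -/
noncomputable def divisorsEquivAddSubgroup (n : ℕ) [NeZero n] :
    n.divisors ≃ AddSubgroup (ZMod n) :=
  Equiv.ofBijective (fun m => AddSubgroup.zmultiples ((m : ℕ) : ZMod n))
    ⟨fun m k h => Subtype.ext (zmultiples_natCast_injOn_divisors m.2 k.2 h), fun H =>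
      have ⟨m, hm, h⟩ := exists_mem_divisors_zmultiples_eq H
      ⟨⟨m, hm⟩, h⟩⟩

end ZMod

/-- The Chabauty space of `G = ℤ × ℤ/nℤ` is homeomorphic to `ℕ̄ × [d(n)]`, where the
accumulation points `(∞, i)` correspond to the `d(n)` subgroups `{0} × ⟨m⟩`, for `m` a
positive divisor of `n`. -/
theorem chabauty_Z_ZMod_homeomorph (n : ℕ) (hn : 1 ≤ n) :
    ∃ φ : ChabautySpace (ℤ × ZMod n) ≃ₜ OnePoint ℕ × Fin n.divisors.card,
      ∀ H : ChabautySpace (ℤ × ZMod n),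
        ((φ H).1 = ∞ ↔ ∃ m : ℕ, 0 < m ∧ m ∣ n ∧
          H.1 = AddSubgroup.prod ⊥ (AddSubgroup.zmultiples (m : ZMod n))) := by
  have : NeZero n := ⟨by omega⟩
  obtain ⟨φ, hφ⟩ := ChabautySpace.exists_homeomorph_int_prod
    (n.divisors.equivFin.symm.trans (ZMod.divisorsEquivAddSubgroup n))
  refine ⟨φ, fun H => (hφ H).trans ⟨?_, ?_⟩⟩
  · rintro ⟨L, hL⟩
    obtain ⟨m, hm, rfl⟩ := ZMod.exists_mem_divisors_zmultiples_eq L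
    exact ⟨m, Nat.pos_of_mem_divisors hm, Nat.dvd_of_mem_divisors hm, hL⟩
  · rintro ⟨m, -, -, hH⟩
    exact ⟨_, hH⟩
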